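/- There are infinitely many pairs consisting of a rational right triangle and a θ-rational rhombus with a common area and a common perimeter. Precisely: the set of pairs of rationals (u, v) with 0 < u < 1 and 0 < v < 1 such that the right triangle with sides (1−u², 2u, 1+u²) and the rhombus with side p = (1+u)/2 and sin θ = 2v/(1+v²) have equal area and equal perimeter, i.e. u(1−u²) = ((1+u)/2)²·(2v/(1+v²)), is infinite. -/

import Mathlib

/-- A rational `0 < u < 1` for which `1 - sin² θ` is a square, written with denominators cleared,
extends to a solution `(u, v)`. -/
lemma exists_rhombus_of_sq {u w : ℚ} (hu0 : 0 < u) (hu1 : u < 1)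
    (hw : w ^ 2 = (1 + u) ^ 2 - (4 * u * (1 - u)) ^ 2) :
    ∃ v : ℚ, 0 < v ∧ v < 1 ∧
      u * (1 - u ^ 2) = ((1 + u) / 2) ^ 2 * (2 * v / (1 + v ^ 2)) := by
  wlog hw0 : 0 ≤ w generalizing w
  · exact this (w := -w) (by rw [neg_sq, hw]) (by linarith)
  have hs : 0 < 4 * u * (1 - u) := by
    have := sub_pos.2 hu1
    positivity
  have hD : 0 < 1 + u - 4 * u * (1 - u) := by nlinarith [sq_nonneg (8 * u - 3)]
  have hlt : w < 1 + u := by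
    refine lt_of_pow_lt_pow_left₀ 2 (by linarith) ?_
    nlinarith [pow_pos hs 2]
  have hgt : 1 + u - 4 * u * (1 - u) < w := by
    refine lt_of_pow_lt_pow_left₀ 2 hw0 ?_
    nlinarith [mul_pos hD hs]
  obtain ⟨v, hv⟩ : ∃ v, v = (1 + u - w) / (4 * u * (1 - u)) := ⟨_, rfl⟩
  have hvw : v * (4 * u * (1 - u)) = 1 + u - w := by
    rw [hv, div_mul_cancel₀ _ hs.ne']
  refine ⟨v, ?_, ?_, ?_⟩
  · rw [hv]
    exact div_pos (by linarith) hs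
  · rw [hv, div_lt_one hs]
    linarith
  · have hw' : w = 1 + u - v * (4 * u * (1 - u)) := by linarith
    have key : 2 * u * (1 - u) * (1 + v ^ 2) = (1 + u) * v := by
      refine mul_left_cancel₀ hs.ne' ?_
      rw [hw'] at hw
      linear_combination hw / 2
    have hv2 : 1 + v ^ 2 ≠ 0 := by positivity
    field_simp
    linear_combination (1 + u) * key

/-- The birational map from the elliptic curve `y² = x³ - 15x² + 128x` to the quartic
`w² = (1 + u)² - (4u(1 - u))²`. -/
lemma exists_sq_of_curve {x y u : ℚ} (h : y ^ 2 = x ^ 3 - 15 * x ^ 2 + 128 * x)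
    (hd : y - x - 32 ≠ 0) (hu : u = 2 * (x - 16) / (y - x - 32)) :
    ∃ w : ℚ, w ^ 2 = (1 + u) ^ 2 - (4 * u * (1 - u)) ^ 2 := by
  refine ⟨u ^ 2 * x / 2 - 1 - u, ?_⟩
  have hu' : u * (y - x - 32) = 2 * (x - 16) := by rw [hu, div_mul_cancel₀ _ hd]
  by_cases hx : x = 16
  · have : u = 0 := by rw [hu, hx]; simp
    simp [this]
  have hc : u ^ 2 * (x ^ 2 + 64) - 4 * u * (x + 32) - 4 * (x - 16) = 0 := by
    refine (mul_eq_zero.1 ?_).resolve_left (sub_ne_zero.2 hx)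
    linear_combination (-u ^ 2) * h + (u * (y + x + 32) + 2 * (x - 16)) * hu'
  linear_combination (u ^ 2 / 4) * hc

lemma padicValRat_add_of_lt {p : ℕ} [Fact p.Prime] {a b : ℚ} (ha : a ≠ 0) (hb : b ≠ 0)
    (h : padicValRat p a < padicValRat p b) :
    a + b ≠ 0 ∧ padicValRat p (a + b) = padicValRat p a := by
  have hab : a + b ≠ 0 := by
    intro h0
    rw [eq_neg_of_add_eq_zero_left h0, padicValRat.neg] at h
    exact lt_irrefl _ h
  exact ⟨hab, padicValRat.add_eq_of_lt hab ha hb h⟩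

lemma padicValRat_sub_of_lt {p : ℕ} [Fact p.Prime] {a b : ℚ} (ha : a ≠ 0) (hb : b ≠ 0)
    (h : padicValRat p a < padicValRat p b) :
    a - b ≠ 0 ∧ padicValRat p (a - b) = padicValRat p a := by
  rw [sub_eq_add_neg]
  exact padicValRat_add_of_lt ha (neg_ne_zero.2 hb) (by rwa [padicValRat.neg])

lemma padicValRat_ofNat_nonneg (p n : ℕ) [n.AtLeastTwo] :
    0 ≤ padicValRat p (ofNat(n) : ℚ) :=
  zero_le_padicValRat_of_nat n

/-- If `x` has a pole at `2` then so does `y`, with `v₂(x) : v₂(y) = 2 : 3`. -/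
lemma two_mul_padicValRat_of_curve {x y : ℚ} (hx : x ≠ 0)
    (h : y ^ 2 = x ^ 3 - 15 * x ^ 2 + 128 * x) (hv : padicValRat 2 x < 0) :
    2 * padicValRat 2 y = 3 * padicValRat 2 x := by
  have h15 := padicValRat_ofNat_nonneg 2 15
  have h128 := padicValRat_ofNat_nonneg 2 128
  have v3 : padicValRat 2 (x ^ 3) = 3 * padicValRat 2 x := by simp
  have v2 : padicValRat 2 (15 * x ^ 2) = padicValRat 2 15 + 2 * padicValRat 2 x := by
    rw [padicValRat.mul (by norm_num) (pow_ne_zero 2 hx)]; simp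
  have v1 : padicValRat 2 (128 * x) = padicValRat 2 128 + padicValRat 2 x :=
    padicValRat.mul (by norm_num) hx
  obtain ⟨n1, e1⟩ := padicValRat_sub_of_lt (p := 2) (a := x ^ 3) (b := 15 * x ^ 2)
    (by positivity) (by positivity) (by linarith)
  obtain ⟨-, e2⟩ := padicValRat_add_of_lt (p := 2) n1 (b := 128 * x)
    (by positivity) (by linarith)
  have := congrArg (padicValRat 2) h
  rw [e2, e1, v3] at this
  simpa using this

/-- Doubling a point of `y² = x³ - 15x² + 128x` that reduces to infinity modulo `2` lowers the
`2`-adic valuation of `x` by two. -/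
lemma exists_double {x y : ℚ} (hx : 0 < x) (hy : 0 < y)
    (h : y ^ 2 = x ^ 3 - 15 * x ^ 2 + 128 * x) (hv : padicValRat 2 x < 0) :
    ∃ x' y' : ℚ, 0 < x' ∧ 0 < y' ∧ y' ^ 2 = x' ^ 3 - 15 * x' ^ 2 + 128 * x' ∧
      padicValRat 2 x' = padicValRat 2 x - 2 := by
  have h128 := padicValRat_ofNat_nonneg 2 128
  have hvy := two_mul_padicValRat_of_curve hx.ne' h hv
  have v2 : padicValRat 2 (x ^ 2) = 2 * padicValRat 2 x := by simp
  obtain ⟨hn, hvn⟩ := padicValRat_sub_of_lt (p := 2) (a := x ^ 2) (b := 128)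
    (by positivity) (by norm_num) (by linarith)
  have hx' : 0 < ((x ^ 2 - 128) / (2 * y)) ^ 2 := by positivity
  obtain ⟨z, hz⟩ : ∃ z : ℚ, z = (x ^ 2 - 128) *
      (x ^ 4 - 30 * x ^ 3 + 768 * x ^ 2 - 3840 * x + 16384) / (8 * y ^ 3) := ⟨_, rfl⟩
  obtain ⟨x', hx'e⟩ : ∃ x', x' = ((x ^ 2 - 128) / (2 * y)) ^ 2 := ⟨_, rfl⟩
  rw [← hx'e] at hx'
  have hz2 : z ^ 2 = x' ^ 3 - 15 * x' ^ 2 + 128 * x' := by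
    have h4 : y ^ 4 = (x ^ 3 - 15 * x ^ 2 + 128 * x) ^ 2 := by rw [← h]; ring
    rw [hz, hx'e]
    field_simp
    rw [h4, h]
    ring
  refine ⟨x', |z|, hx', ?_, by rwa [sq_abs], ?_⟩
  · refine abs_pos.2 fun h0 => ?_
    rw [h0] at hz2
    nlinarith [mul_pos hx' (show 0 < x' ^ 2 - 15 * x' + 128 by nlinarith [sq_nonneg (2 * x' - 15)])]
  · rw [hx'e, padicValRat.pow, padicValRat.div hn (by positivity),
      padicValRat.mul two_ne_zero hy.ne', hvn, v2,
      show padicValRat 2 2 = 1 from padicValRat.self one_lt_two]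
    push_cast
    linarith

/-- Iterated doubling, starting from `(49/16, 1071/64)`. -/
lemma exists_curve_point (n : ℕ) : ∃ x y : ℚ, 0 < x ∧ 0 < y ∧
    y ^ 2 = x ^ 3 - 15 * x ^ 2 + 128 * x ∧ padicValRat 2 x = -(2 * n + 4) := by
  induction n with
  | zero =>
    refine ⟨49 / 16, 1071 / 64, by norm_num, by norm_num, by norm_num, ?_⟩
    have h49 : padicValRat 2 49 = 0 := by
      have : padicValNat 2 49 = 0 := padicValNat.eq_zero_of_not_dvd (by norm_num)
      exact_mod_cast (padicValRat.of_nat (p := 2) (n := 49)).trans (congrArg Nat.cast this)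
    rw [padicValRat.div (by norm_num) (by norm_num), h49, show (16 : ℚ) = 2 ^ 4 by norm_num,
      padicValRat.pow, show padicValRat 2 2 = 1 from padicValRat.self one_lt_two]
    norm_num
  | succ n ih =>
    obtain ⟨x, y, hx, hy, h, hv⟩ := ih
    obtain ⟨x', y', hx', hy', h', hv'⟩ := exists_double hx hy h (by rw [hv]; linarith)
    exact ⟨x', y', hx', hy', h', by rw [hv', hv]; push_cast; ring⟩

lemma padicValRat_of_quartic_map {x y : ℚ} (hx : x ≠ 0) (hy : y ≠ 0)
    (h : y ^ 2 = x ^ 3 - 15 * x ^ 2 + 128 * x) (hv : padicValRat 2 x < 0) :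
    2 * padicValRat 2 (2 * (x - 16) / (y - x - 32)) = 2 - padicValRat 2 x := by
  have h16 := padicValRat_ofNat_nonneg 2 16
  have h32 := padicValRat_ofNat_nonneg 2 32
  have hvy := two_mul_padicValRat_of_curve hx h hv
  obtain ⟨n1, e1⟩ := padicValRat_sub_of_lt (p := 2) hx (b := 16) (by norm_num) (by linarith)
  obtain ⟨n2, e2⟩ := padicValRat_sub_of_lt (p := 2) hy hx (by linarith)
  obtain ⟨n3, e3⟩ := padicValRat_sub_of_lt (p := 2) n2 (b := 32) (by norm_num) (by linarith)
  rw [padicValRat.div (by positivity) n3, padicValRat.mul two_ne_zero n1, e1, e3, e2,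
    show padicValRat 2 2 = 1 from padicValRat.self one_lt_two]
  linarith

/-- For every point of the curve with positive coordinates and `x ≠ 16`, the point or its negative
is mapped into `0 < u < 1`. -/
lemma exists_sign_quartic_map_mem_Ioo {x y : ℚ} (hx : 0 < x) (hy : 0 < y)
    (h : y ^ 2 = x ^ 3 - 15 * x ^ 2 + 128 * x) (hx16 : x ≠ 16) :
    ∃ z : ℚ, z ^ 2 = y ^ 2 ∧ z - x - 32 ≠ 0 ∧
      0 < 2 * (x - 16) / (z - x - 32) ∧ 2 * (x - 16) / (z - x - 32) < 1 := by
  rcases lt_or_gt_of_ne hx16 with hlt | hgt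
  · have hd : -y - x - 32 < 0 := by linarith
    refine ⟨-y, neg_sq y, hd.ne, div_pos_of_neg_of_neg (by linarith) hd, ?_⟩
    rw [div_lt_one_of_neg hd]
    linarith
  · have h3 : 3 * x < y := by
      refine lt_of_pow_lt_pow_left₀ 2 hy.le ?_
      have : 0 < x * ((x - 8) * (x - 16)) :=
        mul_pos hx (mul_pos (by linarith) (by linarith))
      linarith
    have hd : 0 < y - x - 32 := by linarith
    refine ⟨y, rfl, hd.ne', div_pos (by linarith) hd, ?_⟩
    rw [div_lt_one hd]
    linarith

/-- There are infinitely many rational right triangle and θ-rational rhombus pairs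
with a common area and a common perimeter: infinitely many rationals `0 < u < 1`,
`0 < v < 1` with `u * (1 - u²) = ((1 + u)/2)² * (2v / (1 + v²))`. -/
theorem infinitely_many_rational_pairs :
    {uv : ℚ × ℚ | 0 < uv.1 ∧ uv.1 < 1 ∧ 0 < uv.2 ∧ uv.2 < 1 ∧
      uv.1 * (1 - uv.1 ^ 2) =
        ((1 + uv.1) / 2) ^ 2 * (2 * uv.2 / (1 + uv.2 ^ 2))}.Infinite := by
  have key : ∀ n : ℕ, ∃ uv : ℚ × ℚ, (0 < uv.1 ∧ uv.1 < 1 ∧ 0 < uv.2 ∧ uv.2 < 1 ∧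
      uv.1 * (1 - uv.1 ^ 2) = ((1 + uv.1) / 2) ^ 2 * (2 * uv.2 / (1 + uv.2 ^ 2))) ∧
      padicValRat 2 uv.1 = n + 3 := by
    intro n
    obtain ⟨x, y, hx, hy, h, hv⟩ := exists_curve_point n
    have hv0 : padicValRat 2 x < 0 := by rw [hv]; linarith
    have hx16 : x ≠ 16 := by
      rintro rfl
      linarith [padicValRat_ofNat_nonneg 2 16]
    obtain ⟨z, hz, hd, hu0, hu1⟩ := exists_sign_quartic_map_mem_Ioo hx hy h hx16
    have hz0 : z ≠ 0 := by
      rintro rfl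
      exact (pow_pos hy 2).ne (by simpa using hz)
    obtain ⟨w, hw⟩ := exists_sq_of_curve (hz.trans h) hd rfl
    obtain ⟨v, hv1, hv2, hv3⟩ := exists_rhombus_of_sq hu0 hu1 hw
    refine ⟨(_, v), ⟨hu0, hu1, hv1, hv2, hv3⟩, ?_⟩
    have := padicValRat_of_quartic_map hx.ne' hz0 (hz.trans h) hv0
    dsimp only
    linarith
  choose f hf hval using key
  refine Set.infinite_of_injective_forall_mem (f := f) (fun m n hmn => ?_) hf
  have := hval m
  rw [hmn, hval n] at this
  exact_mod_cast (add_right_cancel this).symm
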